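/- Let X be a metric space, I a nonempty finite index type, z : I → X a finite family of points, i ∈ I, and ε ≥ 0. For every μ in the closed ball of radius ε around μ̂ (i.e., dist(μ̂, μ) ≤ ε), the negative log-likelihood satisfies NLL(i, μ) ≤ NLL(i, μ̂) + 2ε, where NLL(i, ν) = −log(exp(−dist(ν, z i)) / Σ_{j∈I} exp(−dist(ν, z j))). -/

import Mathlib

open scoped BigOperators

/-!
The negative log-likelihood at `ν` equals `dist ν (z i) + log (∑ j, exp (-dist ν (z j)))`.
Moving `ν` by at most `ε` changes every distance by at most `ε`, so each of the two terms, the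
distance and the log-partition function, grows by at most `ε`; hence the constant `2 * ε`.
-/

/-- **Robust upper bound on the negative log-likelihood (Theorem 1, corrected form).**
Whenever the true centroid `μ` lies within the ε-uncertainty ball around the
empirical centroid `μhat`, the negative log-likelihood at `μ` is bounded above
by the computable surrogate `NLL(i, μhat) + 2ε`. -/
theorem nll_le_robust_surrogate {X : Type*} [MetricSpace X]
    {I : Type*} [Fintype I] [Nonempty I] (z : I → X) (i : I)
    (μhat : X) (ε : ℝ) (hε : 0 ≤ ε) :
    ∀ μ : X, dist μhat μ ≤ ε →
      -Real.log (Real.exp (-dist μ (z i)) / ∑ j, Real.exp (-dist μ (z j))) ≤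
        -Real.log (Real.exp (-dist μhat (z i)) /
            ∑ j, Real.exp (-dist μhat (z j))) + 2 * ε := by
  intro μ h
  have pos (ν : X) : 0 < ∑ j, Real.exp (-dist ν (z j)) :=
    Finset.sum_pos (fun j _ => Real.exp_pos _) Finset.univ_nonempty
  have nll (ν : X) : -Real.log (Real.exp (-dist ν (z i)) / ∑ j, Real.exp (-dist ν (z j))) =
      dist ν (z i) + Real.log (∑ j, Real.exp (-dist ν (z j))) := by
    rw [Real.log_div (Real.exp_pos _).ne' (pos ν).ne', Real.log_exp]
    ring
  have sum_le : ∑ j, Real.exp (-dist μ (z j)) ≤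
      Real.exp ε * ∑ j, Real.exp (-dist μhat (z j)) := by
    rw [Finset.mul_sum]
    refine Finset.sum_le_sum fun j _ => ?_
    rw [← Real.exp_add]
    exact Real.exp_le_exp.mpr (by linarith [dist_triangle μhat μ (z j)])
  have log_le := Real.log_le_log (pos μ) sum_le
  rw [Real.log_mul (Real.exp_pos _).ne' (pos μhat).ne', Real.log_exp] at log_le
  rw [nll, nll]
  linarith [dist_triangle_left μ (z i) μhat]
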